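/- arXiv:2002.01178 — 2 statements merged into one kernel-verified Lean document; each statement's English description precedes it below -/
import Mathlib

section
/- Let s_1, s_2, s_3 be binary strings with s_1[1] = s_2[1] = s_3[1] and s_1[−1] = s_2[−1] = s_3[−1]. Then every mean z of s_1, s_2, s_3 satisfies z[1] = s_1[1] and z[−1] = s_1[−1]. -/
/-- One step of a warping path: move down, right, or diagonally. -/
def wpStep (a b : ℕ × ℕ) : Prop :=
  (b.1 = a.1 + 1 ∧ b.2 = a.2) ∨ (b.1 = a.1 ∧ b.2 = a.2 + 1) ∨
    (b.1 = a.1 + 1 ∧ b.2 = a.2 + 1)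

/-- A warping path of order `m × n` (0-based indices). -/
def IsWarpingPath (m n : ℕ) (p : List (ℕ × ℕ)) : Prop :=
  p.head? = some (0, 0) ∧ p.getLast? = some (m - 1, n - 1) ∧
    List.Chain' wpStep p ∧ ∀ q ∈ p, q.1 < m ∧ q.2 < n

/-- The cost of aligning binary strings `x` and `y` along path `p`:
the number of aligned mismatching pairs (for binary symbols,
`(x[i] - y[j])^2` is `0` if the symbols agree and `1` otherwise). -/
def pathCost (x y : List Bool) (p : List (ℕ × ℕ)) : ℕ :=
  (p.map fun q => if x.getD q.1 false = y.getD q.2 false then 0 else 1).sum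

/-- The squared dynamic time warping distance `dtw(x,y)²` of two binary strings. -/
noncomputable def dtwSq (x y : List Bool) : ℕ :=
  sInf {c | ∃ p, IsWarpingPath x.length y.length p ∧ pathCost x y p = c}

/-- The dynamic time warping distance `dtw(x,y)`. -/
noncomputable def dtw (x y : List Bool) : ℝ :=
  Real.sqrt (dtwSq x y)

/-- The condensation of a binary string: collapse every maximal run of equal
consecutive symbols to a single symbol. -/
def condense : List Bool → List Bool
  | [] => []
  | [a] => [a]
  | a :: b :: rest => if a = b then condense (b :: rest) else a :: condense (b :: rest)

/-- Auxiliary function collecting the block sizes of a binary string. -/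
def blockSizesAux : Bool → ℕ → List Bool → List ℕ
  | _, cnt, [] => [cnt]
  | cur, cnt, a :: rest =>
      if a = cur then blockSizesAux cur (cnt + 1) rest
      else cnt :: blockSizesAux a 1 rest

/-- The list of block sizes of a binary string (sizes of the maximal runs
of equal consecutive symbols, from left to right). -/
def blockSizes : List Bool → List ℕ
  | [] => []
  | a :: rest => blockSizesAux a 1 rest

/-- The objective `F(z) = Σᵢ dtw(sᵢ, z)²`. -/
noncomputable def Fobj (ss : List (List Bool)) (z : List Bool) : ℕ :=
  (ss.map fun s => dtwSq s z).sum

/-- `z` is a mean of the strings `ss`: a nonempty binary string minimizing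
`F` among all nonempty binary strings. -/
def IsMean (ss : List (List Bool)) (z : List Bool) : Prop :=
  z ≠ [] ∧ ∀ w : List Bool, w ≠ [] → Fobj ss z ≤ Fobj ss w

/-- The optimal value of a Min 1-Separated Sum instance with integers `b`
(1-based indexing) and selection size `r`: minimize the sum of `r` selected
integers, no two of which are consecutive. -/
noncomputable def mssValue (b : List ℕ) (r : ℕ) : ℕ :=
  sInf {s | ∃ I : List ℕ, I.length = r ∧ (∀ i ∈ I, 1 ≤ i ∧ i ≤ b.length) ∧
    List.Chain' (fun a c => a + 2 ≤ c) I ∧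
    (I.map fun i => b.getD (i - 1) 0).sum = s}

/-!
Suppose that all the strings `s` start with `a`, and let `z` start with `b ≠ a`. Collapsing a
leading `b b` of `z` to `b` increases no distance, so let the leading block of `z` be a single `b`.
An optimal warping path between `s` and `z` pays for its first cell. If it goes down, or diagonally
to a symbol `b` of `s`, then prepending `a` to `z` saves this payment; if it ends there, goes right,
or goes diagonally to a symbol `a` of `s`, then replacing `b` by `a` and merging it with the block
of `a`s that follows saves it. Prepending `a` increases no distance, so either it decreases the sum
of the distances, or the second modification decreases each of them. Hence `z` is not a mean. For
last symbols, reverse all strings.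
-/

/-- The squared difference of two binary symbols. -/
def mismatch (a b : Bool) : ℕ := if a = b then 0 else 1

@[simp]
lemma mismatch_self (a : Bool) : mismatch a a = 0 := if_pos rfl

lemma mismatch_of_ne {a b : Bool} (h : a ≠ b) : mismatch a b = 1 := if_neg h

@[simp]
lemma pathCost_cons (x y : List Bool) (q : ℕ × ℕ) (p : List (ℕ × ℕ)) :
    pathCost x y (q :: p) = mismatch (x.getD q.1 false) (y.getD q.2 false) + pathCost x y p := by
  simp only [pathCost, mismatch, List.map_cons, List.sum_cons]

/-- `WarpingCost x y c` says that `c` is the cost of some warping path between `x` and `y`.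
The path is built from its last cell backwards; a constructor is named after the step that leaves
the new first cell. -/
inductive WarpingCost : List Bool → List Bool → ℕ → Prop
  | single (a b : Bool) : WarpingCost [a] [b] (mismatch a b)
  | down (a : Bool) {b : Bool} {x y : List Bool} {c : ℕ} :
      WarpingCost x (b :: y) c → WarpingCost (a :: x) (b :: y) (mismatch a b + c)
  | right {a : Bool} (b : Bool) {x y : List Bool} {c : ℕ} :
      WarpingCost (a :: x) y c → WarpingCost (a :: x) (b :: y) (mismatch a b + c)
  | diag (a b : Bool) {x y : List Bool} {c : ℕ} :
      WarpingCost x y c → WarpingCost (a :: x) (b :: y) (mismatch a b + c)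

namespace WarpingCost

lemma exists_cons (a b : Bool) (x y : List Bool) : ∃ c, WarpingCost (a :: x) (b :: y) c := by
  induction x generalizing a with
  | nil =>
    induction y generalizing b with
    | nil => exact ⟨_, single a b⟩
    | cons b' y ih => exact (ih b').imp' _ fun _ => right b
  | cons a' x ih => exact (ih a').imp' _ fun _ => down a

lemma ne_nil_left {x y : List Bool} {c : ℕ} (h : WarpingCost x y c) : x ≠ [] := by
  cases h <;> exact List.cons_ne_nil _ _

lemma ne_nil_right {x y : List Bool} {c : ℕ} (h : WarpingCost x y c) : y ≠ [] := by
  cases h <;> exact List.cons_ne_nil _ _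

end WarpingCost

/-- A warping path of order `m × n` whose first cell is `q` instead of `(0, 0)`. -/
def IsWarpingPathFrom (m n : ℕ) (q : ℕ × ℕ) (p : List (ℕ × ℕ)) : Prop :=
  p.head? = some q ∧ p.getLast? = some (m - 1, n - 1) ∧
    List.IsChain wpStep p ∧ ∀ r ∈ p, r.1 < m ∧ r.2 < n

lemma IsWarpingPathFrom.cons {m n : ℕ} {q q' : ℕ × ℕ} {p : List (ℕ × ℕ)}
    (hp : IsWarpingPathFrom m n q' p) (hstep : wpStep q q') (hq : q.1 < m ∧ q.2 < n) :
    IsWarpingPathFrom m n q (q :: p) := by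
  obtain ⟨hhead, hlast, hchain, hmem⟩ := hp
  obtain ⟨p, rfl⟩ := List.head?_eq_some_iff.1 hhead
  exact ⟨rfl, by rwa [List.getLast?_cons_cons], .cons_cons hstep hchain,
    List.forall_mem_cons.2 ⟨hq, hmem⟩⟩

lemma drop_eq_getD_cons {α : Type*} {x : List α} {i : ℕ} (d : α) (hi : i < x.length) :
    x.drop i = x.getD i d :: x.drop (i + 1) := by
  rw [List.drop_eq_getElem_cons hi, List.getD_eq_getElem _ _ hi]

lemma IsWarpingPathFrom.warpingCost {x y : List Bool} {q : ℕ × ℕ} {p : List (ℕ × ℕ)}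
    (hp : IsWarpingPathFrom x.length y.length q p) :
    WarpingCost (x.drop q.1) (y.drop q.2) (pathCost x y p) := by
  induction p generalizing q with
  | nil => cases hp.1
  | cons r p ih =>
    obtain ⟨hhead, hlast, hchain, hmem⟩ := hp
    obtain rfl : r = q := Option.some.inj hhead
    obtain ⟨i, j⟩ := r
    obtain ⟨hi, hj⟩ : i < x.length ∧ j < y.length := hmem _ List.mem_cons_self
    rw [pathCost_cons, drop_eq_getD_cons false hi, drop_eq_getD_cons false hj]
    cases p with
    | nil =>
      obtain ⟨rfl, rfl⟩ : i = x.length - 1 ∧ j = y.length - 1 := by simpa using hlast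
      rw [List.drop_eq_nil_of_le (by omega), List.drop_eq_nil_of_le (by omega)]
      exact .single _ _
    | cons r p =>
      obtain ⟨hstep, hchain⟩ := List.isChain_cons_cons.1 hchain
      have hrest : WarpingCost (x.drop r.1) (y.drop r.2) (pathCost x y (r :: p)) :=
        ih ⟨rfl, by rwa [List.getLast?_cons_cons] at hlast, hchain,
          fun s hs => hmem s (List.mem_cons_of_mem _ hs)⟩
      obtain ⟨i', j'⟩ := r
      obtain ⟨hi', hj'⟩ | ⟨hi', hj'⟩ | ⟨hi', hj'⟩ := hstep <;>
        dsimp only at hi' hj' <;> subst hi' hj'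
      · exact .down _ (drop_eq_getD_cons false hj ▸ hrest)
      · exact .right _ (drop_eq_getD_cons false hi ▸ hrest)
      · exact .diag _ _ hrest

lemma WarpingCost.exists_isWarpingPathFrom {x y : List Bool} {c : ℕ} (h : WarpingCost x y c)
    (u v : List Bool) :
    ∃ p, IsWarpingPathFrom (u ++ x).length (v ++ y).length (u.length, v.length) p ∧
      pathCost (u ++ x) (v ++ y) p = c := by
  induction h generalizing u v with
  | single a b =>
    exact ⟨[(u.length, v.length)], by simp [IsWarpingPathFrom], by simp [pathCost, mismatch]⟩
  | down a _ ih =>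
    obtain ⟨p, hp, rfl⟩ := ih (u ++ [a]) v
    rw [List.append_assoc, List.singleton_append] at hp ⊢
    exact ⟨_, hp.cons (by simp [wpStep]) (by simp), by simp⟩
  | right b _ ih =>
    obtain ⟨p, hp, rfl⟩ := ih u (v ++ [b])
    rw [List.append_assoc, List.singleton_append] at hp ⊢
    exact ⟨_, hp.cons (by simp [wpStep]) (by simp), by simp⟩
  | diag a b _ ih =>
    obtain ⟨p, hp, rfl⟩ := ih (u ++ [a]) (v ++ [b])
    simp only [List.append_assoc, List.singleton_append] at hp ⊢
    exact ⟨_, hp.cons (by simp [wpStep]) (by simp), by simp⟩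

lemma warpingCost_iff_exists_isWarpingPath {x y : List Bool} {c : ℕ} :
    WarpingCost x y c ↔ ∃ p, IsWarpingPath x.length y.length p ∧ pathCost x y p = c :=
  ⟨fun h => h.exists_isWarpingPathFrom [] [],
    fun ⟨_, hp, hc⟩ => hc ▸ IsWarpingPathFrom.warpingCost (q := (0, 0)) hp⟩

lemma dtwSq_eq_sInf_warpingCost (x y : List Bool) :
    dtwSq x y = sInf {c | WarpingCost x y c} := by
  simp only [dtwSq, warpingCost_iff_exists_isWarpingPath]

lemma WarpingCost.dtwSq_le {x y : List Bool} {c : ℕ} (h : WarpingCost x y c) : dtwSq x y ≤ c :=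
  dtwSq_eq_sInf_warpingCost x y ▸ Nat.sInf_le h

lemma warpingCost_dtwSq {x y : List Bool} (hx : x ≠ []) (hy : y ≠ []) :
    WarpingCost x y (dtwSq x y) := by
  obtain ⟨a, x, rfl⟩ := List.exists_cons_of_ne_nil hx
  obtain ⟨b, y, rfl⟩ := List.exists_cons_of_ne_nil hy
  rw [dtwSq_eq_sInf_warpingCost]
  exact Nat.sInf_mem (WarpingCost.exists_cons a b x y)

/-- The image of a path under the half-turn of the `m × n` grid, traversed backwards. -/
def reversePath (m n : ℕ) (p : List (ℕ × ℕ)) : List (ℕ × ℕ) :=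
  (p.map fun q => (m - 1 - q.1, n - 1 - q.2)).reverse

lemma IsWarpingPath.reverse {m n : ℕ} {p : List (ℕ × ℕ)} (hp : IsWarpingPath m n p) :
    IsWarpingPath m n (reversePath m n p) := by
  obtain ⟨hhead, hlast, hchain, hmem⟩ := hp
  refine ⟨by simp [reversePath, hlast], by simp [reversePath, hhead], ?_, ?_⟩
  · refine List.isChain_reverse.2 <| (List.isChain_map _).2 <|
      List.IsChain.imp_of_mem_imp (fun q r hq hr hstep => ?_) hchain
    have := hmem q hq
    have := hmem r hr
    simp only [wpStep] at hstep ⊢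
    omega
  · simp only [reversePath, List.mem_reverse, List.forall_mem_map]
    intro q hq
    have := hmem q hq
    omega

lemma pathCost_reversePath {x y : List Bool} {p : List (ℕ × ℕ)}
    (hp : ∀ q ∈ p, q.1 < x.length ∧ q.2 < y.length) :
    pathCost x.reverse y.reverse (reversePath x.length y.length p) = pathCost x y p := by
  simp only [pathCost, reversePath, List.map_reverse, List.sum_reverse, List.map_map]
  refine congrArg List.sum (List.map_congr_left fun q hq => ?_)
  obtain ⟨hx, hy⟩ := hp q hq
  simp only [Function.comp_apply]
  rw [List.getD_reverse _ (by omega), List.getD_reverse _ (by omega),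
    Nat.sub_sub_self (by omega), Nat.sub_sub_self (by omega)]

lemma WarpingCost.reverse {x y : List Bool} {c : ℕ} (h : WarpingCost x y c) :
    WarpingCost x.reverse y.reverse c := by
  obtain ⟨p, hp, rfl⟩ := warpingCost_iff_exists_isWarpingPath.1 h
  refine warpingCost_iff_exists_isWarpingPath.2
    ⟨reversePath x.length y.length p, ?_, pathCost_reversePath hp.2.2.2⟩
  simpa only [List.length_reverse] using hp.reverse

lemma warpingCost_reverse_iff {x y : List Bool} {c : ℕ} :
    WarpingCost x.reverse y.reverse c ↔ WarpingCost x y c :=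
  ⟨fun h => by simpa only [List.reverse_reverse] using h.reverse, WarpingCost.reverse⟩

lemma dtwSq_reverse (x y : List Bool) : dtwSq x.reverse y.reverse = dtwSq x y := by
  simp only [dtwSq_eq_sInf_warpingCost, warpingCost_reverse_iff]

lemma Fobj_reverse (ss : List (List Bool)) (z : List Bool) :
    Fobj (ss.map List.reverse) z.reverse = Fobj ss z := by
  simp only [Fobj, List.map_map, Function.comp_def, dtwSq_reverse]

lemma IsMean.reverse {ss : List (List Bool)} {z : List Bool} (hz : IsMean ss z) :
    IsMean (ss.map List.reverse) z.reverse := by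
  refine ⟨mt List.reverse_eq_nil_iff.1 hz.1, fun w hw => ?_⟩
  rw [Fobj_reverse, ← w.reverse_reverse, Fobj_reverse]
  exact hz.2 _ (mt List.reverse_eq_nil_iff.1 hw)

lemma WarpingCost.exists_le_of_cons_cons {x u : List Bool} {b : Bool} {c : ℕ}
    (h : WarpingCost x (b :: b :: u) c) : ∃ c' ≤ c, WarpingCost x (b :: u) c' := by
  generalize hy : b :: b :: u = y at h
  induction h with
  | single => simp at hy
  | down a _ ih =>
    cases hy
    obtain ⟨c', hle, h⟩ := ih rfl
    exact ⟨_, by omega, h.down a⟩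
  | right _ h => cases hy; exact ⟨_, by omega, h⟩
  | diag a _ h => cases hy; exact ⟨_, le_rfl, h.down a⟩

lemma dtwSq_collapse_le {s : List Bool} (hs : s ≠ []) (b : Bool) (u : List Bool) :
    dtwSq s (b :: u) ≤ dtwSq s (b :: b :: u) := by
  obtain ⟨c, hle, h⟩ := (warpingCost_dtwSq hs (List.cons_ne_nil b _)).exists_le_of_cons_cons
  exact h.dtwSq_le.trans hle

lemma dtwSq_prepend_le {s z : List Bool} {a : Bool} (hs : s.head? = some a) (hz : z ≠ []) :
    dtwSq s (a :: z) ≤ dtwSq s z := by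
  obtain ⟨t, rfl⟩ := List.head?_eq_some_iff.1 hs
  simpa using ((warpingCost_dtwSq (List.cons_ne_nil a t) hz).right a).dtwSq_le

lemma WarpingCost.exists_lt_of_head_ne {a b : Bool} {t u : List Bool} {c : ℕ} (hba : b ≠ a)
    (hu : ∀ e ∈ u.head?, e = a) (h : WarpingCost (a :: t) (b :: u) c) :
    ∃ c' < c, WarpingCost (a :: t) (a :: b :: u) c' ∨ WarpingCost (a :: t) (a :: u.tail) c' := by
  have hab : mismatch a b = 1 := mismatch_of_ne hba.symm
  cases h with
  | single => exact ⟨0, by omega, .inr (by simpa using single a a)⟩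
  | @down _ _ _ _ c h => exact ⟨c, by omega, .inl (by simpa using diag a a h)⟩
  | @right _ _ _ _ c h =>
    obtain ⟨e, u, rfl⟩ := List.exists_cons_of_ne_nil h.ne_nil_right
    obtain rfl : e = a := hu e rfl
    exact ⟨c, by omega, .inr h⟩
  | @diag _ _ _ _ c h =>
    obtain ⟨d, t, rfl⟩ := List.exists_cons_of_ne_nil h.ne_nil_left
    obtain ⟨e, u, rfl⟩ := List.exists_cons_of_ne_nil h.ne_nil_right
    obtain rfl : e = a := hu e rfl
    refine ⟨c, by omega, ?_⟩
    by_cases hd : d = e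
    · exact .inr (by simpa using h.down e)
    · obtain rfl : d = b := (Bool.eq_not.2 hd).trans (Bool.eq_not.2 hba).symm
      exact .inl (by simpa using diag e e (h.right d))

lemma dtwSq_prepend_lt_or_dtwSq_merge_lt {s u : List Bool} {a b : Bool}
    (hs : s.head? = some a) (hba : b ≠ a) (hu : ∀ e ∈ u.head?, e = a) :
    dtwSq s (a :: b :: u) < dtwSq s (b :: u) ∨ dtwSq s (a :: u.tail) < dtwSq s (b :: u) := by
  obtain ⟨t, rfl⟩ := List.head?_eq_some_iff.1 hs
  have hopt := warpingCost_dtwSq (List.cons_ne_nil a t) (List.cons_ne_nil b u)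
  obtain ⟨c, hlt, h⟩ := hopt.exists_lt_of_head_ne hba hu
  exact h.imp (·.dtwSq_le.trans_lt hlt) (·.dtwSq_le.trans_lt hlt)

section

variable {ss : List (List Bool)} {a b : Bool}

lemma exists_Fobj_lt_of_singleton_leading_block (hss : ss ≠ []) (hhead : ∀ s ∈ ss, s.head? = some a)
    (hba : b ≠ a) {u : List Bool} (hu : ∀ e ∈ u.head?, e = a) :
    ∃ w ≠ [], Fobj ss w < Fobj ss (b :: u) := by
  by_cases hprep : ∃ s ∈ ss, dtwSq s (a :: b :: u) < dtwSq s (b :: u)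
  · exact ⟨a :: b :: u, List.cons_ne_nil _ _, List.sum_lt_sum _ _
      (fun s hs => dtwSq_prepend_le (hhead s hs) (List.cons_ne_nil b u)) hprep⟩
  · push Not at hprep
    have hlt (s) (hs : s ∈ ss) : dtwSq s (a :: u.tail) < dtwSq s (b :: u) :=
      (dtwSq_prepend_lt_or_dtwSq_merge_lt (hhead s hs) hba hu).resolve_left (hprep s hs).not_gt
    exact ⟨a :: u.tail, List.cons_ne_nil _ _, List.sum_lt_sum_of_ne_nil hss _ _ hlt⟩

lemma exists_Fobj_lt_of_head_ne (hss : ss ≠ []) (hhead : ∀ s ∈ ss, s.head? = some a)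
    (hba : b ≠ a) (u : List Bool) : ∃ w ≠ [], Fobj ss w < Fobj ss (b :: u) := by
  induction u with
  | nil => exact exists_Fobj_lt_of_singleton_leading_block hss hhead hba (by simp)
  | cons d u ih =>
    by_cases hd : d = a
    · exact exists_Fobj_lt_of_singleton_leading_block hss hhead hba (by simp [hd])
    · obtain rfl : d = b := (Bool.eq_not.2 hd).trans (Bool.eq_not.2 hba).symm
      obtain ⟨w, hw, hlt⟩ := ih
      refine ⟨w, hw, hlt.trans_le <| List.sum_le_sum fun s hs =>
        dtwSq_collapse_le ?_ d u⟩
      rintro rfl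
      simpa using hhead _ hs

lemma IsMean.head?_eq {z : List Bool} (hz : IsMean ss z) (hss : ss ≠ [])
    (hhead : ∀ s ∈ ss, s.head? = some a) : z.head? = some a := by
  obtain ⟨b, u, rfl⟩ := List.exists_cons_of_ne_nil hz.1
  by_contra hne
  obtain ⟨w, hw, hlt⟩ := exists_Fobj_lt_of_head_ne hss hhead (by simpa using hne) u
  exact (hz.2 w hw).not_gt hlt

lemma IsMean.getLast?_eq {z : List Bool} (hz : IsMean ss z) (hss : ss ≠ [])
    (hlast : ∀ s ∈ ss, s.getLast? = some a) : z.getLast? = some a := by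
  rw [← List.head?_reverse]
  exact hz.reverse.head?_eq (by simpa using hss)
    (by simpa only [List.forall_mem_map, List.head?_reverse] using hlast)

end

theorem mean_of_three_first_last_general {ss : List (List Bool)} {a b : Bool} (hss : ss ≠ [])
    (hhead : ∀ s ∈ ss, s.head? = some a) (hlast : ∀ s ∈ ss, s.getLast? = some b)
    {z : List Bool} (hz : IsMean ss z) : z.head? = some a ∧ z.getLast? = some b :=
  ⟨hz.head?_eq hss hhead, hz.getLast?_eq hss hlast⟩

/-- if three binary strings share their first symbol and share
their last symbol, then every mean starts and ends with these symbols. -/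
theorem mean_of_three_first_last (s1 s2 s3 : List Bool)
    (h1 : s1 ≠ []) (h2 : s2 ≠ []) (h3 : s3 ≠ [])
    (hf12 : s1.head? = s2.head?) (hf23 : s2.head? = s3.head?)
    (hl12 : s1.getLast? = s2.getLast?) (hl23 : s2.getLast? = s3.getLast?)
    (z : List Bool) (hz : IsMean [s1, s2, s3] z) :
    z.head? = s1.head? ∧ z.getLast? = s1.getLast? := by
  have hhead : ∀ s ∈ [s1, s2, s3], s.head? = s1.head? := by simp [← hf23, ← hf12]
  have hlast : ∀ s ∈ [s1, s2, s3], s.getLast? = s1.getLast? := by simp [← hl23, ← hl12]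
  rw [List.head?_eq_some_head h1] at hhead ⊢
  rw [List.getLast?_eq_some_getLast h1] at hlast ⊢
  exact mean_of_three_first_last_general (List.cons_ne_nil s1 _) hhead hlast hz
end

section
/- For all binary strings s_1, …, s_k there exists a condensed binary string z that minimizes the objective G(z) := max_{i ∈ [k]} dtw(s_i, z)² over all binary strings z (that is, the Binary DTW-Center problem always admits a condensed optimal solution). -/
/-- The Binary DTW-Center objective `G(z) = maxᵢ dtw(sᵢ, z)²`. -/
noncomputable def Gobj (ss : List (List Bool)) (z : List Bool) : ℕ :=
  (ss.map fun s => dtwSq s z).foldr max 0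

/-!
The center exists because `Gobj` takes values in `ℕ`, so it suffices that condensing a string does
not increase its distance to any other string. Condensing deletes, one at a time, symbols that
repeat their predecessor. Such a deletion identifies two neighbouring positions, and the
identification sends a warping path to a sequence of the same cost in which every step is a path
step or a repetition; removing the repetitions yields a warping path that costs no more.
-/

theorem exists_sublist_isChain_of_isChain_reflGen {α : Type*} {R : α → α → Prop}
    {l : List α} (hl : l.IsChain (Relation.ReflGen R)) :
    ∃ l' : List α, l'.Sublist l ∧ l'.head? = l.head? ∧ l'.getLast? = l.getLast? ∧ l'.IsChain R := by
  induction l with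
  | nil => exact ⟨[], .slnil, rfl, rfl, .nil⟩
  | cons a t ih =>
    obtain ⟨hhead, htail⟩ := List.isChain_cons.1 hl
    obtain ⟨t', hsub, hfirst, hlast, hchain⟩ := ih htail
    by_cases hrep : t.head? = some a
    · obtain ⟨t, rfl⟩ := List.head?_eq_some_iff.1 hrep
      exact ⟨t', hsub.cons a, hfirst, by rw [hlast, List.getLast?_cons_cons], hchain⟩
    · refine ⟨a :: t', hsub.cons_cons a, rfl, by simp only [List.getLast?_cons, hlast], ?_⟩
      refine hchain.cons fun b hb => ?_
      rw [hfirst] at hb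
      rcases hhead b hb with _ | hab
      · exact absurd hb hrep
      · exact hab

section WarpingPath

variable {m n m' n' : ℕ} {p : List (ℕ × ℕ)}

theorem IsWarpingPath.concat (hp : IsWarpingPath (m + 1) (n + 1) p)
    (hstep : wpStep (m, n) (m', n')) : IsWarpingPath (m' + 1) (n' + 1) (p ++ [(m', n')]) := by
  obtain ⟨hfirst, hlast, hchain, hlt⟩ := hp
  refine ⟨by simp [hfirst], by simp, hchain.append (.singleton _) (by simp_all), fun q hq => ?_⟩
  have hmn : m ≤ m' ∧ n ≤ n' := by simp only [wpStep] at hstep; omega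
  rcases List.mem_append.1 hq with hq | hq
  · have := hlt q hq
    omega
  · simp [List.mem_singleton.1 hq]

theorem exists_isWarpingPath (hm : m ≠ 0) (hn : n ≠ 0) : ∃ p, IsWarpingPath m n p := by
  obtain ⟨m, rfl⟩ := Nat.exists_eq_succ_of_ne_zero hm
  obtain ⟨n, rfl⟩ := Nat.exists_eq_succ_of_ne_zero hn
  clear hm hn
  induction m with
  | zero =>
    induction n with
    | zero => exact ⟨[(0, 0)], rfl, rfl, .singleton _, by simp⟩
    | succ n ih => exact ih.imp' _ fun p hp => hp.concat (by simp [wpStep])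
  | succ m ih => exact ih.imp' _ fun p hp => hp.concat (by simp [wpStep])

theorem reflGen_wpStep_iff {a b : ℕ × ℕ} :
    Relation.ReflGen wpStep a b ↔
      (b.1 = a.1 ∨ b.1 = a.1 + 1) ∧ (b.2 = a.2 ∨ b.2 = a.2 + 1) := by
  simp only [Relation.reflGen_iff, wpStep, Prod.ext_iff]
  omega

/-- `f` maps the positions of a string of length `n` onto those of a string of length `n'`,
preserving the two endpoints and moving by at most one position at a time; only the values
`f j` with `j < n` matter. -/
structure IsCollapse (n n' : ℕ) (f : ℕ → ℕ) : Prop where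
  map_zero : f 0 = 0
  map_last : f (n - 1) = n' - 1
  map_lt : ∀ j < n, f j < n'
  map_succ : ∀ j, j + 1 < n → f (j + 1) = f j ∨ f (j + 1) = f j + 1

theorem IsCollapse.id (n : ℕ) : IsCollapse n n id :=
  ⟨rfl, rfl, fun _ hj => hj, fun _ _ => .inr rfl⟩

theorem isCollapse_ite_pred {k : ℕ} (hk : k < n) :
    IsCollapse (n + 1) n fun j => if j ≤ k then j else j - 1 := by
  constructor <;> grind

theorem IsWarpingPath.isChain_reflGen_map {f g : ℕ → ℕ} (hp : IsWarpingPath m n p)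
    (hf : IsCollapse m m' f) (hg : IsCollapse n n' g) :
    (p.map (Prod.map f g)).IsChain (Relation.ReflGen wpStep) := by
  obtain ⟨-, -, hchain, hlt⟩ := hp
  refine (List.isChain_map _).2 (List.IsChain.imp_of_mem_imp ?_ hchain)
  rintro ⟨i, j⟩ ⟨i', j'⟩ - hq hstep
  obtain ⟨hi, hj⟩ := reflGen_wpStep_iff.1 (.single hstep)
  obtain ⟨hi', hj'⟩ := hlt _ hq
  refine reflGen_wpStep_iff.2 ⟨?_, ?_⟩
  · rcases hi with rfl | rfl
    exacts [.inl rfl, hf.map_succ _ hi']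
  · rcases hj with rfl | rfl
    exacts [.inl rfl, hg.map_succ _ hj']

theorem IsWarpingPath.exists_sublist_map {f g : ℕ → ℕ} (hp : IsWarpingPath m n p)
    (hf : IsCollapse m m' f) (hg : IsCollapse n n' g) :
    ∃ p' : List (ℕ × ℕ), IsWarpingPath m' n' p' ∧ p'.Sublist (p.map (Prod.map f g)) := by
  obtain ⟨p', hsub, hfirst, hlast, hchain⟩ :=
    exists_sublist_isChain_of_isChain_reflGen (hp.isChain_reflGen_map hf hg)
  obtain ⟨pfirst, plast, -, hlt⟩ := hp
  refine ⟨p', ⟨?_, ?_, hchain, fun q hq => ?_⟩, hsub⟩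
  · simp [hfirst, pfirst, hf.map_zero, hg.map_zero]
  · simp [hlast, plast, hf.map_last, hg.map_last]
  · obtain ⟨r, hr, rfl⟩ := List.mem_map.1 (hsub.subset hq)
    exact ⟨hf.map_lt _ (hlt r hr).1, hg.map_lt _ (hlt r hr).2⟩

end WarpingPath

section Distance

variable {x x' y y' : List Bool} {p p' : List (ℕ × ℕ)}

theorem pathCost_le_of_sublist (h : p'.Sublist p) : pathCost x y p' ≤ pathCost x y p :=
  (h.map _).sum_le_sum fun _ _ => Nat.zero_le _

theorem IsWarpingPath.dtwSq_le_pathCost (hp : IsWarpingPath x.length y.length p) :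
    dtwSq x y ≤ pathCost x y p :=
  Nat.sInf_le ⟨p, hp, rfl⟩

theorem exists_pathCost_eq_dtwSq (hx : x ≠ []) (hy : y ≠ []) :
    ∃ p, IsWarpingPath x.length y.length p ∧ pathCost x y p = dtwSq x y := by
  obtain ⟨p, hp⟩ := exists_isWarpingPath (mt List.length_eq_zero_iff.1 hx)
    (mt List.length_eq_zero_iff.1 hy)
  exact Nat.sInf_mem (s := {c | ∃ p, IsWarpingPath x.length y.length p ∧ pathCost x y p = c})
    ⟨_, p, hp, rfl⟩

theorem pathCost_map_of_getD_eq {f g : ℕ → ℕ}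
    (hx : ∀ q ∈ p, x'.getD (f q.1) false = x.getD q.1 false)
    (hy : ∀ q ∈ p, y'.getD (g q.2) false = y.getD q.2 false) :
    pathCost x' y' (p.map (Prod.map f g)) = pathCost x y p := by
  rw [pathCost, pathCost, List.map_map]
  refine congrArg List.sum (List.map_congr_left fun q hq => ?_)
  simp only [Function.comp_apply, Prod.map_fst, Prod.map_snd, hx q hq, hy q hq]

theorem dtwSq_le_dtwSq_of_isCollapse {f g : ℕ → ℕ} (hx : x ≠ []) (hy : y ≠ [])
    (hf : IsCollapse x.length x'.length f) (hg : IsCollapse y.length y'.length g)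
    (hfx : ∀ i < x.length, x'.getD (f i) false = x.getD i false)
    (hgy : ∀ j < y.length, y'.getD (g j) false = y.getD j false) :
    dtwSq x' y' ≤ dtwSq x y := by
  obtain ⟨p, hp, hcost⟩ := exists_pathCost_eq_dtwSq hx hy
  obtain ⟨p', hp', hsub⟩ := hp.exists_sublist_map hf hg
  obtain ⟨-, -, -, hlt⟩ := hp
  calc dtwSq x' y' ≤ pathCost x' y' p' := hp'.dtwSq_le_pathCost
    _ ≤ pathCost x' y' (p.map (Prod.map f g)) := pathCost_le_of_sublist hsub
    _ = pathCost x y p :=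
      pathCost_map_of_getD_eq (fun q hq => hfx _ (hlt q hq).1) fun q hq => hgy _ (hlt q hq).2
    _ = dtwSq x y := hcost

end Distance

section Condense

variable {s : List Bool}

theorem condense_eq_destutter (y : List Bool) : condense y = y.destutter (· ≠ ·) := by
  induction y using condense.induct with
  | case1 => rfl
  | case2 a => rfl
  | case3 a rest ih =>
    rw [condense, if_pos rfl, ih, List.destutter_cons_cons, if_neg (not_not.2 rfl),
      List.destutter_cons']
  | case4 a b rest hab ih =>
    rw [condense, if_neg hab, ih, List.destutter_cons_cons, if_pos hab, List.destutter_cons']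

theorem isChain_condense (y : List Bool) : (condense y).IsChain (· ≠ ·) :=
  condense_eq_destutter y ▸ y.isChain_destutter _

theorem condense_eq_nil {y : List Bool} : condense y = [] ↔ y = [] := by
  rw [condense_eq_destutter, List.destutter_eq_nil]

theorem dtwSq_append_cons_le_append_cons_cons (hs : s ≠ []) (u : List Bool) (a : Bool)
    (v : List Bool) : dtwSq s (u ++ a :: v) ≤ dtwSq s (u ++ a :: a :: v) := by
  have hmerge : IsCollapse (u ++ a :: a :: v).length (u ++ a :: v).length
      fun j => if j ≤ u.length then j else j - 1 := by
    simpa [← Nat.add_assoc] using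
      isCollapse_ite_pred (k := u.length) (n := (u ++ a :: v).length) (by simp)
  refine dtwSq_le_dtwSq_of_isCollapse hs (by simp) (.id _) hmerge (fun _ _ => rfl) fun j _ => ?_
  grind

theorem dtwSq_append_condense_le (hs : s ≠ []) (u y : List Bool) :
    dtwSq s (u ++ condense y) ≤ dtwSq s (u ++ y) := by
  induction y using condense.induct generalizing u with
  | case1 => rfl
  | case2 a => rfl
  | case3 a rest ih =>
    rw [condense, if_pos rfl]
    exact (ih u).trans (dtwSq_append_cons_le_append_cons_cons hs u a rest)
  | case4 a b rest hab ih =>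
    rw [condense, if_neg hab]
    simpa using ih (u ++ [a])

theorem dtwSq_condense_le (hs : s ≠ []) (y : List Bool) : dtwSq s (condense y) ≤ dtwSq s y :=
  dtwSq_append_condense_le hs [] y

end Condense

theorem Gobj_le_Gobj_of_forall_dtwSq_le {ss : List (List Bool)} {z w : List Bool}
    (h : ∀ s ∈ ss, dtwSq s z ≤ dtwSq s w) : Gobj ss z ≤ Gobj ss w :=
  List.max_le_of_forall_le _ _ <| List.forall_mem_map.2 fun s hs =>
    List.le_max_of_le (List.mem_map_of_mem hs) (h s hs)

theorem Gobj_condense_le {ss : List (List Bool)} (hne : ∀ s ∈ ss, s ≠ []) (w : List Bool) :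
    Gobj ss (condense w) ≤ Gobj ss w :=
  Gobj_le_Gobj_of_forall_dtwSq_le fun s hs => dtwSq_condense_le (hne s hs) w

theorem exists_forall_Gobj_le (ss : List (List Bool)) :
    ∃ z : List Bool, z ≠ [] ∧ ∀ w : List Bool, w ≠ [] → Gobj ss z ≤ Gobj ss w :=
  have hnonempty : {w : List Bool | w ≠ []}.Nonempty := ⟨[true], List.cons_ne_nil _ _⟩
  ⟨Function.argminOn (Gobj ss) _ hnonempty, Function.argminOn_mem _ _ hnonempty,
    fun _ hw => Function.argminOn_le (Gobj ss) _ hw⟩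

/-- Binary DTW-Center always admits a condensed optimal
solution. -/
theorem binary_dtw_center_condensed_solution (ss : List (List Bool))
    (hss : ss ≠ []) (hne : ∀ s ∈ ss, s ≠ []) :
    ∃ z : List Bool, z ≠ [] ∧ List.Chain' (· ≠ ·) z ∧
      ∀ w : List Bool, w ≠ [] → Gobj ss z ≤ Gobj ss w := by
  obtain ⟨y, hy, hmin⟩ := exists_forall_Gobj_le ss
  exact ⟨condense y, mt condense_eq_nil.1 hy, isChain_condense y,
    fun w hw => (Gobj_condense_le hne y).trans (hmin w hw)⟩
end
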